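/- arXiv:2510.27574 — 3 statements merged into one kernel-verified Lean document; each statement's English description precedes it below -/
import Mathlib

section
/- For all n ≥ 1 and 1 ≤ k ≤ n, the number of Fubini rankings with n competitors having exactly k lucky cars equals k!·S(n,k), where S(n,k) is the Stirling number of the second kind. -/
/-- A Fubini ranking with `n` competitors: entries are in `[n]` (represented by `Fin n`,
where `i : Fin n` stands for the rank `i.val + 1`), and for every rank `r` occurring among
the entries, the number of indices `j` whose entry is strictly smaller than `r` equals
`r - 1` (i.e. `r.val` in the `Fin n` encoding). -/
def IsFubini {n : ℕ} (α : Fin n → Fin n) : Prop :=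
  ∀ r : Fin n, (∃ i, α i = r) →
    (Finset.univ.filter (fun j => α j < r)).card = (r : ℕ)

/-- The set of lucky cars of `α`: car `i` is lucky iff it is the first occurrence of its
value, i.e. `α j ≠ α i` for all `j < i`. -/
def luckySet {n : ℕ} (α : Fin n → Fin n) : Finset (Fin n) :=
  Finset.univ.filter (fun i => ∀ j, j < i → α j ≠ α i)

/-- The number of lucky cars of `α`. -/
def lucky {n : ℕ} (α : Fin n → Fin n) : ℕ := (luckySet α).card

instance {n : ℕ} : DecidablePred (IsFubini (n := n)) := fun α =>
  inferInstanceAs (Decidable (∀ r : Fin n, (∃ i, α i = r) →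
    (Finset.univ.filter (fun j => α j < r)).card = (r : ℕ)))

/-- The Stirling number of the second kind `S(n,k)`: the number of partitions of an
`n`-element set into `k` nonempty blocks. -/
noncomputable def stirling2 (n k : ℕ) : ℕ :=
  Nat.card {P : Finset (Finset (Fin n)) //
    P.card = k ∧ (∀ B ∈ P, B.Nonempty) ∧
      ∀ i : Fin n, ∃! B : Finset (Fin n), B ∈ P ∧ i ∈ B}

/-- The lucky cars are the first occurrences of the values of `α`, so there are as many of them
as there are values. -/
lemma lucky_eq_card_image {n : ℕ} (α : Fin n → Fin n) :
    lucky α = (Finset.univ.image α).card := by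
  have himage : (luckySet α).image α = Finset.univ.image α := by
    ext r
    simp only [luckySet, Finset.mem_image, Finset.mem_filter, Finset.mem_univ, true_and]
    refine ⟨fun ⟨i, _, hi⟩ => ⟨i, hi⟩, fun ⟨i, hi⟩ => ?_⟩
    obtain ⟨m, hm, hmin⟩ := WellFounded.has_min (wellFounded_lt (α := Fin n))
      {j | α j = r} ⟨i, hi⟩
    exact ⟨m, fun j hj h => hmin j (h.trans hm) hj, hm⟩
  rw [lucky, ← himage, Finset.card_image_of_injOn]
  intro i hi j hj hij
  simp only [luckySet, Finset.coe_filter, Finset.mem_univ, true_and, Set.mem_ofPred_eq] at hi hj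
  rcases lt_trichotomy i j with h | h | h
  · exact absurd hij (hj i h)
  · exact h
  · exact absurd hij.symm (hi j h)

/-- The rank of each competitor when competitors are compared through `f`. -/
def rankOf {n k : ℕ} (f : Fin n → Fin k) (i : Fin n) : Fin n :=
  ⟨(Finset.univ.filter (fun j => f j < f i)).card, by
    have h : (Finset.univ.filter (fun j => f j < f i)) ⊂ Finset.univ :=
      Finset.filter_ssubset.2 ⟨i, Finset.mem_univ i, lt_irrefl _⟩
    simpa using Finset.card_lt_card h⟩

lemma rankOf_lt_rankOf {n k : ℕ} {f : Fin n → Fin k} {i j : Fin n} :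
    rankOf f i < rankOf f j ↔ f i < f j := by
  constructor
  · intro h
    by_contra! hle
    refine absurd h (not_lt.2 (Fin.mk_le_mk.2 (Finset.card_le_card ?_)))
    exact Finset.monotone_filter_right _ fun a _ ha => ha.trans_le hle
  · intro h
    refine Fin.mk_lt_mk.2 (Finset.card_lt_card ?_)
    refine Finset.ssubset_iff_of_subset
      (Finset.monotone_filter_right _ fun a _ ha => ha.trans h) |>.2 ⟨i, ?_, ?_⟩
    · simpa using h
    · simp

lemma rankOf_eq_rankOf {n k : ℕ} {f : Fin n → Fin k} {i j : Fin n} :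
    rankOf f i = rankOf f j ↔ f i = f j := by
  simp only [le_antisymm_iff, ← not_lt, rankOf_lt_rankOf]

lemma isFubini_rankOf {n k : ℕ} (f : Fin n → Fin k) : IsFubini (rankOf f) := by
  rintro _ ⟨i, rfl⟩
  simp only [rankOf_lt_rankOf]
  rfl

lemma lucky_rankOf {n k : ℕ} {f : Fin n → Fin k} (hf : Function.Surjective f) :
    lucky (rankOf f) = k := by
  obtain ⟨s, hs⟩ := hf.hasRightInverse
  have himage : Finset.univ.image (rankOf f) = Finset.univ.image (rankOf f ∘ s) := by
    ext r
    simp only [Finset.mem_image, Finset.mem_univ, true_and, Function.comp_apply]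
    exact ⟨fun ⟨i, hi⟩ => ⟨f i, (rankOf_eq_rankOf.2 (hs (f i))).trans hi⟩,
      fun ⟨c, hc⟩ => ⟨s c, hc⟩⟩
  rw [lucky_eq_card_image, himage, Finset.card_image_of_injective, Finset.card_univ,
    Fintype.card_fin]
  intro c d h
  simpa [hs c, hs d] using rankOf_eq_rankOf.1 h

/-- A surjection onto a finite chain is bounded by any map inducing the same comparisons. -/
lemma le_of_surjective_of_lt_iff_lt {ι : Type*} {k : ℕ} {f g : ι → Fin k}
    (hf : Function.Surjective f) (h : ∀ i j, f i < f j ↔ g i < g j) (i : ι) : f i ≤ g i := by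
  obtain ⟨s, hs⟩ := hf.hasRightInverse
  have hmono : StrictMono (g ∘ s) := fun c d hcd => (h _ _).1 (by rwa [hs c, hs d])
  have hle : f i ≤ g (s (f i)) := hmono.le_apply
  have hge : g (s (f i)) ≤ g i := not_lt.1 fun hlt => by
    simpa [hs (f i)] using (h _ _).2 hlt
  exact hle.trans hge

lemma exists_surjective_rankOf_eq {n k : ℕ} {α : Fin n → Fin n} (hα : IsFubini α)
    (hk : lucky α = k) : ∃ f : Fin n → Fin k, Function.Surjective f ∧ rankOf f = α := by
  rw [lucky_eq_card_image] at hk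
  let e := (Finset.univ.image α).orderIsoOfFin hk
  refine ⟨fun i => e.symm ⟨α i, Finset.mem_image_of_mem α (Finset.mem_univ i)⟩, ?_, ?_⟩
  · intro c
    obtain ⟨i, -, hi⟩ := Finset.mem_image.1 (e c).2
    exact ⟨i, by simp [hi]⟩
  · ext i
    simpa [rankOf] using hα (α i) ⟨i, rfl⟩

/-- Fubini rankings with `k` lucky cars correspond to surjections onto `Fin k`. -/
lemma card_fubini_lucky_eq_card_surjective (n k : ℕ) :
    Nat.card {α : Fin n → Fin n // IsFubini α ∧ lucky α = k}
      = Nat.card {f : Fin n → Fin k // Function.Surjective f} := by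
  symm
  refine Nat.card_eq_of_bijective
    (fun f => ⟨rankOf f.1, isFubini_rankOf f.1, lucky_rankOf f.2⟩) ⟨?_, ?_⟩
  · rintro ⟨f, hf⟩ ⟨g, hg⟩ h
    have hrank : rankOf f = rankOf g := congrArg Subtype.val h
    have hlt : ∀ i j, f i < f j ↔ g i < g j := fun i j => by
      rw [← rankOf_lt_rankOf, hrank, rankOf_lt_rankOf]
    exact Subtype.ext <| funext fun i => le_antisymm
      (le_of_surjective_of_lt_iff_lt hf hlt i)
      (le_of_surjective_of_lt_iff_lt hg (fun i j => (hlt i j).symm) i)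
  · rintro ⟨α, hα, hk⟩
    obtain ⟨f, hf, hfα⟩ := exists_surjective_rankOf_eq hα hk
    exact ⟨⟨f, hf⟩, Subtype.ext hfα⟩

/-- The set partitions of `Fin n` into `k` nonempty blocks. -/
abbrev BlockPartition (n k : ℕ) : Type :=
  {P : Finset (Finset (Fin n)) //
    P.card = k ∧ (∀ B ∈ P, B.Nonempty) ∧
      ∀ i : Fin n, ∃! B : Finset (Fin n), B ∈ P ∧ i ∈ B}

namespace BlockPartition

variable {n k : ℕ}

/-- The block containing `i`. -/
noncomputable def block (P : BlockPartition n k) (i : Fin n) : P.1 :=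
  ⟨(P.2.2.2 i).choose, (P.2.2.2 i).choose_spec.1.1⟩

lemma block_eq_iff {P : BlockPartition n k} {i : Fin n} {B : P.1} :
    P.block i = B ↔ i ∈ B.1 := by
  constructor
  · rintro rfl
    exact (P.2.2.2 i).choose_spec.1.2
  · intro h
    exact Subtype.ext ((P.2.2.2 i).choose_spec.2 B.1 ⟨B.2, h⟩).symm

lemma block_surjective (P : BlockPartition n k) : Function.Surjective P.block := fun B =>
  (P.2.2.1 B.1 B.2).imp fun _ hi => block_eq_iff.2 hi

lemma mem_iff_of_labelling (P : BlockPartition n k) (e : P.1 ≃ Fin k) (B : Finset (Fin n)) :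
    B ∈ P.1 ↔ ∃ c, B = Finset.univ.filter (fun i => e (P.block i) = c) := by
  have hfilter : ∀ c, Finset.univ.filter (fun i => e (P.block i) = c) = (e.symm c).1 := by
    intro c
    ext i
    simp [← Equiv.eq_symm_apply, block_eq_iff]
  simp only [hfilter]
  exact ⟨fun h => ⟨e ⟨B, h⟩, by simp⟩, fun ⟨c, hc⟩ => hc ▸ (e.symm c).2⟩

/-- The partition of `Fin n` into the fibres of a surjection. -/
def fibres (f : Fin n → Fin k) (hf : Function.Surjective f) : BlockPartition n k := by
  refine ⟨Finset.univ.image fun c => Finset.univ.filter (fun i => f i = c), ?_, ?_, ?_⟩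
  · rw [Finset.card_image_of_injective, Finset.card_univ, Fintype.card_fin]
    intro c d h
    obtain ⟨i, rfl⟩ := hf c
    simpa using (Finset.ext_iff.1 h i)
  · simp only [Finset.mem_image, Finset.mem_univ, true_and]
    rintro _ ⟨c, rfl⟩
    obtain ⟨i, hi⟩ := hf c
    exact ⟨i, by simpa using hi⟩
  · intro i
    refine ⟨Finset.univ.filter (fun j => f j = f i), by simp, ?_⟩
    simp only [Finset.mem_image, Finset.mem_univ, true_and]
    rintro _ ⟨⟨c, rfl⟩, hi⟩
    rw [(Finset.mem_filter.1 hi).2]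

lemma block_fibres (f : Fin n → Fin k) (hf : Function.Surjective f) (i : Fin n) :
    ((fibres f hf).block i).1 = Finset.univ.filter (fun j => f j = f i) :=
  congrArg Subtype.val <| block_eq_iff (P := fibres f hf)
    (B := ⟨Finset.univ.filter (fun j => f j = f i), by simp [fibres]⟩) |>.2 (by simp)

lemma exists_labelling_fibres (f : Fin n → Fin k) (hf : Function.Surjective f) :
    ∃ e : (fibres f hf).1 ≃ Fin k, ∀ i, e ((fibres f hf).block i) = f i := by
  obtain ⟨s, hs⟩ := hf.hasRightInverse
  have hblock : ∀ i j, (fibres f hf).block i = (fibres f hf).block j ↔ f i = f j := by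
    intro i j
    rw [block_eq_iff, block_fibres]
    simp
  have hbij : Function.Bijective fun c => (fibres f hf).block (s c) := by
    refine ⟨fun c d h => by simpa [hs c, hs d] using (hblock _ _).1 h, fun B => ?_⟩
    obtain ⟨i, rfl⟩ := (fibres f hf).block_surjective B
    exact ⟨f i, (hblock _ _).2 (hs (f i))⟩
  refine ⟨(Equiv.ofBijective _ hbij).symm, fun i => ?_⟩
  rw [Equiv.symm_apply_eq]
  exact (hblock _ _).2 (hs (f i)).symm

end BlockPartition

/-- Surjections onto `Fin k` correspond to partitions into `k` blocks labelled by `Fin k`. -/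
lemma card_surjective_eq_card_labelled (n k : ℕ) :
    Nat.card {f : Fin n → Fin k // Function.Surjective f}
      = Nat.card (Σ P : BlockPartition n k, P.1 ≃ Fin k) := by
  symm
  refine Nat.card_eq_of_bijective
    (fun p => ⟨fun i => p.2 (p.1.block i), p.2.surjective.comp p.1.block_surjective⟩) ⟨?_, ?_⟩
  · rintro ⟨P, e⟩ ⟨Q, e'⟩ h
    have hval : ∀ i, e (P.block i) = e' (Q.block i) := congrFun (congrArg Subtype.val h)
    obtain rfl : P = Q := Subtype.ext <| Finset.ext fun B => by
      rw [P.mem_iff_of_labelling e, Q.mem_iff_of_labelling e']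
      simp only [hval]
    congr 1
    ext B
    obtain ⟨i, rfl⟩ := P.block_surjective B
    rw [hval]
  · rintro ⟨f, hf⟩
    obtain ⟨e, he⟩ := BlockPartition.exists_labelling_fibres f hf
    exact ⟨⟨BlockPartition.fibres f hf, e⟩, Subtype.ext (funext he)⟩

lemma card_labelled_eq_factorial_mul_stirling2 (n k : ℕ) :
    Nat.card (Σ P : BlockPartition n k, P.1 ≃ Fin k) = Nat.factorial k * stirling2 n k := by
  have hcard : ∀ P : BlockPartition n k, Nat.card (P.1 ≃ Fin k) = Nat.factorial k := by
    intro P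
    rw [Nat.card_congr (Equiv.equivCongr (P.1.equivFinOfCardEq P.2.1) (Equiv.refl _)),
      Nat.card_eq_fintype_card, Fintype.card_perm, Fintype.card_fin]
  have := Fintype.ofFinite (BlockPartition n k)
  rw [Nat.card_sigma, Finset.sum_congr rfl fun P _ => hcard P, Finset.sum_const,
    Finset.card_univ, ← Nat.card_eq_fintype_card, smul_eq_mul, mul_comm, stirling2]

/-- The number of Fubini rankings with `n` competitors having exactly
`k` lucky cars equals `k! · S(n,k)`. -/
theorem card_fubini_lucky_eq_factorial_mul_stirling
    (n k : ℕ) (hn : 1 ≤ n) (hk : 1 ≤ k) (hkn : k ≤ n) :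
    Nat.card {α : Fin n → Fin n // IsFubini α ∧ lucky α = k}
      = Nat.factorial k * stirling2 n k := by
  rw [card_fubini_lucky_eq_card_surjective, card_surjective_eq_card_labelled,
    card_labelled_eq_factorial_mul_stirling2]
end

section
/- For every n ≥ 1, the lucky polynomial of weakly increasing Fubini rankings satisfies ∑_{α ∈ FR_n^↑} q^{lucky(α)} = q·(q+1)^{n−1}, as an identity of polynomials in q (equivalently, for every real q). -/
instance {n : ℕ} : DecidablePred (Monotone : (Fin n → Fin n) → Prop) := fun f =>
  inferInstanceAs (Decidable (∀ a b : Fin n, a ≤ b → f a ≤ f b))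

/-- Weakly increasing Fubini rankings are exactly the monotone, idempotent, deflationary
self-maps of `Fin n`. -/
theorem isFubini_iff_of_monotone {n : ℕ} {α : Fin n → Fin n} (hα : Monotone α) :
    IsFubini α ↔ ∀ i, α i ≤ i ∧ α (α i) = α i := by
  constructor
  · intro hF i
    have hcard := hF (α i) ⟨i, rfl⟩
    have hsub : Finset.univ.filter (fun j => α j < α i) ⊆ Finset.Iio (α i) := by
      intro j hj
      have hj' : α j < α i := by simpa using hj
      have hle : Finset.Iic j ⊆ Finset.univ.filter (fun j => α j < α i) := by
        intro k hk
        simpa using (hα (Finset.mem_Iic.1 hk)).trans_lt hj'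
      have hc := Finset.card_le_card hle
      rw [hcard, Fin.card_Iic] at hc
      exact Finset.mem_Iio.2 (Fin.lt_def.2 hc)
    have heq := Finset.eq_of_subset_of_card_le hsub (by rw [hcard, Fin.card_Iio])
    have hiff : ∀ j, α j < α i ↔ j < α i := fun j => by
      simpa using Finset.ext_iff.1 heq j
    have hle : α i ≤ i := not_lt.1 fun h => lt_irrefl _ ((hiff i).2 h)
    exact ⟨hle, le_antisymm (hα hle) (not_lt.1 fun h => lt_irrefl _ ((hiff (α i)).1 h))⟩
  · rintro h r ⟨i, rfl⟩
    have heq : Finset.univ.filter (fun j => α j < α i) = Finset.Iio (α i) := by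
      ext j
      simp only [Finset.mem_filter, Finset.mem_univ, true_and, Finset.mem_Iio]
      constructor
      · intro hj
        by_contra hji
        have := hα (not_lt.1 hji)
        rw [(h i).2] at this
        exact absurd hj (not_lt.2 this)
      · exact fun hj => (h j).1.trans_lt hj
    rw [heq, Fin.card_Iio]

/-- The lucky cars of a deflationary idempotent map are its fixed points. -/
theorem mem_luckySet_iff {n : ℕ} {α : Fin n → Fin n}
    (h : ∀ i, α i ≤ i ∧ α (α i) = α i) (i : Fin n) : i ∈ luckySet α ↔ α i = i := by
  simp only [luckySet, Finset.mem_filter, Finset.mem_univ, true_and]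
  constructor
  · intro hi
    by_contra hne
    exact hi (α i) (lt_of_le_of_ne (h i).1 hne) (h i).2
  · intro hi j hj heq
    exact absurd ((heq.trans hi).symm.trans_le (h j).1) (not_le.2 hj)

/-- The map sending `i` to the largest element of `insert 0 T` that is at most `i`. -/
def floorMap {m : ℕ} (T : Finset (Fin (m + 1))) (i : Fin (m + 1)) : Fin (m + 1) :=
  ((insert 0 T).filter (· ≤ i)).max' ⟨0, by simp⟩

theorem floorMap_mem {m : ℕ} (T : Finset (Fin (m + 1))) (i : Fin (m + 1)) :
    floorMap T i ∈ insert 0 T ∧ floorMap T i ≤ i :=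
  Finset.mem_filter.1 (Finset.max'_mem ((insert 0 T).filter (· ≤ i)) ⟨0, by simp⟩)

theorem le_floorMap {m : ℕ} {T : Finset (Fin (m + 1))} {i j : Fin (m + 1)}
    (hj : j ∈ insert 0 T) (hji : j ≤ i) : j ≤ floorMap T i :=
  Finset.le_max' _ _ (Finset.mem_filter.2 ⟨hj, hji⟩)

theorem floorMap_eq_self_iff {m : ℕ} {T : Finset (Fin (m + 1))} {i : Fin (m + 1)} :
    floorMap T i = i ↔ i ∈ insert 0 T :=
  ⟨fun h => h ▸ (floorMap_mem T i).1,
    fun h => le_antisymm (floorMap_mem T i).2 (le_floorMap h le_rfl)⟩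

theorem floorMap_monotone {m : ℕ} (T : Finset (Fin (m + 1))) : Monotone (floorMap T) :=
  fun i _ hij => le_floorMap (floorMap_mem T i).1 ((floorMap_mem T i).2.trans hij)

theorem floorMap_deflationary_idempotent {m : ℕ} (T : Finset (Fin (m + 1)))
    (i : Fin (m + 1)) : floorMap T i ≤ i ∧ floorMap T (floorMap T i) = floorMap T i :=
  ⟨(floorMap_mem T i).2, floorMap_eq_self_iff.2 (floorMap_mem T i).1⟩

theorem luckySet_floorMap {m : ℕ} (T : Finset (Fin (m + 1))) :
    luckySet (floorMap T) = insert 0 T := by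
  ext i
  rw [mem_luckySet_iff (floorMap_deflationary_idempotent T), floorMap_eq_self_iff]

theorem zero_mem_luckySet {m : ℕ} (α : Fin (m + 1) → Fin (m + 1)) : 0 ∈ luckySet α := by
  simp [luckySet]

theorem floorMap_luckySet_erase {m : ℕ} {α : Fin (m + 1) → Fin (m + 1)} (hα : Monotone α)
    (h : ∀ i, α i ≤ i ∧ α (α i) = α i) : floorMap ((luckySet α).erase 0) = α := by
  have hins := Finset.insert_erase (zero_mem_luckySet α)
  funext i
  have hmem := floorMap_mem ((luckySet α).erase 0) i
  rw [hins, mem_luckySet_iff h] at hmem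
  refine le_antisymm (hmem.1.symm.trans_le (hα hmem.2)) (le_floorMap ?_ (h i).1)
  rw [hins, mem_luckySet_iff h]
  exact (h i).2

/-- The lucky polynomial of weakly increasing Fubini rankings with `n`
competitors satisfies `∑_{α ∈ FR_n^↑} q^{lucky(α)} = q(q+1)^(n−1)` for every real `q`. -/
theorem lucky_polynomial_weakly_increasing_fubini (n : ℕ) (hn : 1 ≤ n) (q : ℝ) :
    ∑ α ∈ Finset.univ.filter (fun α : Fin n → Fin n => IsFubini α ∧ Monotone α),
        q ^ lucky α
      = q * (q + 1) ^ (n - 1) := by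
  obtain ⟨m, rfl⟩ := Nat.exists_eq_add_of_le' hn
  have hsum : ∑ T ∈ (Finset.univ.erase (0 : Fin (m + 1))).powerset, q ^ (T.card + 1)
      = q * (q + 1) ^ (m + 1 - 1) := by
    have hpow := Finset.sum_pow_mul_eq_add_pow q 1 (Finset.univ.erase (0 : Fin (m + 1)))
    simp only [one_pow, mul_one] at hpow
    simp only [pow_succ', ← Finset.mul_sum, hpow]
    simp
  rw [← hsum]
  refine Finset.sum_bij' (fun α _ => (luckySet α).erase 0) (fun T _ => floorMap T)
    ?_ ?_ ?_ ?_ ?_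
  · intro α _
    exact Finset.mem_powerset.2 (Finset.erase_subset_erase _ (Finset.subset_univ _))
  · intro T _
    have hmono := floorMap_monotone T
    exact Finset.mem_filter.2 ⟨Finset.mem_univ _,
      (isFubini_iff_of_monotone hmono).2 (floorMap_deflationary_idempotent T), hmono⟩
  · intro α hα
    obtain ⟨hF, hmono⟩ := (Finset.mem_filter.1 hα).2
    exact floorMap_luckySet_erase hmono ((isFubini_iff_of_monotone hmono).1 hF)
  · intro T hT
    have h0 : (0 : Fin (m + 1)) ∉ T := fun h0 => by
      simpa using Finset.mem_powerset.1 hT h0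
    simp only [luckySet_floorMap, Finset.erase_insert h0]
  · intro α _
    rw [Finset.card_erase_add_one (zero_mem_luckySet α), lucky]
end

section
/- For all n ≥ 1 and 1 ≤ k ≤ n, the number of weakly increasing unit Fubini rankings with n competitors having exactly k lucky cars equals the binomial coefficient C(k, n−k) (which is 0 when n−k > k). -/
/-- `α` has every value occurring at most twice among its entries (the "unit" condition:
a unit Fubini ranking is a Fubini ranking in which at most two competitors share a rank). -/
def IsUnit2 {n : ℕ} (α : Fin n → Fin n) : Prop :=
  ∀ r : Fin n, (Finset.univ.filter (fun i => α i = r)).card ≤ 2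

open Finset

/-- In a weakly increasing Fubini ranking, the entries smaller than an occurring value `r` are
exactly the first `r` ones. -/
lemma IsFubini.apply_lt_apply_iff {n : ℕ} {α : Fin n → Fin n} (hf : IsFubini α)
    (hm : Monotone α) (i j : Fin n) : α j < α i ↔ j < α i := by
  have hc := hf (α i) ⟨i, rfl⟩
  constructor
  · intro h
    have hsub : Iic j ⊆ univ.filter (fun l => α l < α i) := fun l hl => by
      simpa using (hm (mem_Iic.mp hl)).trans_lt h
    have := card_le_card hsub
    rw [hc, Fin.card_Iic] at this
    exact Fin.lt_def.mpr this
  · intro h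
    by_contra hn
    have hsub : univ.filter (fun l => α l < α i) ⊆ Iio j := fun l hl => by
      rw [mem_Iio]
      by_contra hl'
      exact hn ((hm (not_lt.mp hl')).trans_lt (mem_filter.mp hl).2)
    have := card_le_card hsub
    rw [hc, Fin.card_Iio] at this
    exact absurd (Fin.lt_def.mp h) (not_lt.mpr this)

/-- Weakly increasing unit Fubini rankings are described locally: each entry either equals its
index, or equals the preceding index, which is then a fixed point. -/
lemma isFubini_isUnit2_monotone_iff {n : ℕ} (α : Fin n → Fin n) :
    (IsFubini α ∧ IsUnit2 α ∧ Monotone α) ↔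
      ∀ i, α i = i ∨ ((α i : ℕ) + 1 = i ∧ α (α i) = α i) := by
  constructor
  · rintro ⟨hf, hu, hm⟩ i
    have hle : α i ≤ i := by
      have := hf.apply_lt_apply_iff hm i i
      simpa using this
    have hfix : α (α i) = α i :=
      le_antisymm (hm hle) (by
        have := hf.apply_lt_apply_iff hm i (α i)
        simpa using this)
    by_cases h : α i = i
    · exact Or.inl h
    refine Or.inr ⟨?_, hfix⟩
    have hsub : Icc (α i) i ⊆ univ.filter (fun l => α l = α i) := fun l hl => by
      rw [mem_Icc] at hl
      have h₁ := hm hl.1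
      rw [hfix] at h₁
      simpa using le_antisymm (hm hl.2) h₁
    have hc := (card_le_card hsub).trans (hu (α i))
    rw [Fin.card_Icc] at hc
    have hlt := Fin.lt_def.mp (lt_of_le_of_ne hle h)
    omega
  · intro h
    have hb : ∀ i, (α i : ℕ) = i ∨ ((α i : ℕ) + 1 = i ∧ α (α i) = α i) := fun i =>
      (h i).imp_left (congrArg Fin.val)
    refine ⟨?_, ?_, ?_⟩
    · rintro r ⟨i, rfl⟩
      have hfix : α (α i) = α i := (h i).elim (fun e => by rw [e, e]) And.right
      have : univ.filter (fun j => α j < α i) = Iio (α i) := by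
        ext j
        simp only [mem_filter, mem_univ, true_and, mem_Iio, Fin.lt_def]
        rcases eq_or_ne j (α i) with rfl | hj
        · simp [hfix]
        · have := Fin.val_ne_of_ne hj
          have := hb j
          omega
      rw [this, Fin.card_Iio]
    · intro r
      have hsub : (univ.filter (fun i => α i = r)).map Fin.valEmbedding ⊆
          {(r : ℕ), (r : ℕ) + 1} := by
        intro x hx
        simp only [mem_map, mem_filter, mem_univ, true_and, Fin.valEmbedding_apply] at hx
        obtain ⟨i, rfl, rfl⟩ := hx
        have := hb i
        simp only [mem_insert, mem_singleton]
        omega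
      have := card_le_card hsub
      rw [card_map] at this
      exact this.trans card_le_two
    · intro i j hij
      rcases eq_or_lt_of_le hij with rfl | hij
      · rfl
      · have := hb i
        have := hb j
        rw [Fin.lt_def] at hij
        rw [Fin.le_def]
        omega

lemma mem_luckySet_iff_apply_eq {n : ℕ} {α : Fin n → Fin n}
    (h : ∀ i, α i = i ∨ ((α i : ℕ) + 1 = i ∧ α (α i) = α i)) (i : Fin n) :
    i ∈ luckySet α ↔ α i = i := by
  simp only [luckySet, mem_filter, mem_univ, true_and]
  constructor
  · intro hl
    refine (h i).resolve_right fun ⟨h₁, h₂⟩ => hl (α i) (Fin.lt_def.mpr (by omega)) h₂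
  · intro hi j hj e
    have h₁ := congrArg Fin.val e
    rw [hi] at h₁
    rw [Fin.lt_def] at hj
    rcases h j with h₂ | h₂
    · rw [h₂] at h₁
      omega
    · omega

/-- The `m`-element subsets of `{1, …, n - 1}` without two consecutive elements. -/
def sparseSets (n m : ℕ) : Finset (Finset ℕ) :=
  (powersetCard m (range n)).filter fun S => ∀ i ∈ S, 0 < i ∧ i + 1 ∉ S

lemma mem_sparseSets {n m : ℕ} {S : Finset ℕ} :
    S ∈ sparseSets n m ↔ (∀ i ∈ S, i < n) ∧ #S = m ∧ ∀ i ∈ S, 0 < i ∧ i + 1 ∉ S := by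
  simp [sparseSets, mem_powersetCard, subset_iff, and_assoc]

lemma sparseSets_succ_succ (n m : ℕ) :
    sparseSets (n + 2) (m + 1) =
      sparseSets (n + 1) (m + 1) ∪ (sparseSets n m).image (insert (n + 1)) := by
  ext S
  simp only [mem_union, mem_image, mem_sparseSets]
  constructor
  · rintro ⟨hlt, hc, hs⟩
    by_cases hn : n + 1 ∈ S
    · refine Or.inr ⟨S.erase (n + 1), ⟨fun i hi => ?_, ?_, fun i hi => ?_⟩, insert_erase hn⟩
      · rw [mem_erase] at hi
        have h₁ := hlt i hi.2
        have h₂ : i ≠ n := by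
          rintro rfl
          exact (hs i hi.2).2 hn
        omega
      · rw [card_erase_of_mem hn, hc, Nat.add_sub_cancel]
      · have := hs i (mem_of_mem_erase hi)
        exact ⟨this.1, fun h => this.2 (mem_of_mem_erase h)⟩
    · refine Or.inl ⟨fun i hi => ?_, hc, hs⟩
      have h₁ := hlt i hi
      have h₂ : i ≠ n + 1 := fun e => hn (e ▸ hi)
      omega
  · rintro (⟨hlt, hc, hs⟩ | ⟨T, ⟨hlt, hc, hs⟩, rfl⟩)
    · exact ⟨fun i hi => (hlt i hi).trans (Nat.lt_succ_self _), hc, hs⟩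
    · have hn : ∀ i, n ≤ i → i ∉ T := fun i hi h => absurd (hlt i h) (not_lt.mpr hi)
      refine ⟨fun i hi => ?_, ?_, fun i hi => ?_⟩
      · rcases mem_insert.mp hi with rfl | hi
        · omega
        · have := hlt i hi
          omega
      · rw [card_insert_of_notMem (hn _ (by omega)), hc]
      · rcases mem_insert.mp hi with rfl | hi
        · refine ⟨by omega, ?_⟩
          simpa using hn (n + 1 + 1) (by omega)
        · have := hlt i hi
          refine ⟨(hs i hi).1, ?_⟩
          rw [mem_insert, not_or]
          exact ⟨by omega, (hs i hi).2⟩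

lemma card_sparseSets_succ_succ (n m : ℕ) :
    #(sparseSets (n + 2) (m + 1)) = #(sparseSets (n + 1) (m + 1)) + #(sparseSets n m) := by
  have hn : ∀ T ∈ sparseSets n m, n + 1 ∉ T := fun T hT h => by
    have := (mem_sparseSets.mp hT).1 _ h
    omega
  rw [sparseSets_succ_succ, card_union_of_disjoint, card_image_of_injOn]
  · intro S hS T hT h
    have := congrArg (fun U => U.erase (n + 1)) h
    simpa [erase_insert (hn S hS), erase_insert (hn T hT)] using this
  · rw [disjoint_left]
    intro S hS hS'
    obtain ⟨T, -, rfl⟩ := mem_image.mp hS'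
    exact lt_irrefl _ ((mem_sparseSets.mp hS).1 _ (mem_insert_self _ _))

lemma sparseSets_zero_right (n : ℕ) : sparseSets n 0 = {∅} := by
  ext S
  rw [mem_sparseSets, mem_singleton, card_eq_zero]
  exact ⟨fun h => h.2.1, by rintro rfl; simp⟩

lemma sparseSets_of_le_one {n : ℕ} (hn : n ≤ 1) (m : ℕ) : sparseSets n (m + 1) = ∅ := by
  refine eq_empty_of_forall_notMem fun S hS => ?_
  obtain ⟨hlt, hc, hs⟩ := mem_sparseSets.mp hS
  obtain ⟨i, hi⟩ := card_pos.mp (by omega : 0 < #S)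
  have := hlt i hi
  have := (hs i hi).1
  omega

lemma card_sparseSets (n m : ℕ) : #(sparseSets n m) = (n - m).choose m := by
  induction n using Nat.twoStepInduction generalizing m with
  | zero => cases m <;> simp [sparseSets_zero_right, sparseSets_of_le_one]
  | one => cases m <;> simp [sparseSets_zero_right, sparseSets_of_le_one]
  | more n ih₁ ih₂ =>
    cases m with
    | zero => simp [sparseSets_zero_right]
    | succ m =>
      rw [card_sparseSets_succ_succ, ih₁, ih₂, Nat.add_sub_add_right]
      rcases le_or_gt m n with h | h
      · rw [show n + 2 - (m + 1) = n - m + 1 by omega, Nat.choose_succ_succ', add_comm]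
      · rw [Nat.choose_eq_zero_of_lt, Nat.choose_eq_zero_of_lt, Nat.choose_eq_zero_of_lt] <;> omega

/-- The unlucky cars of `α`, as natural numbers. -/
def unluckySet {n : ℕ} (α : Fin n → Fin n) : Finset ℕ :=
  (luckySet α)ᶜ.map Fin.valEmbedding

lemma card_unluckySet {n : ℕ} (α : Fin n → Fin n) : #(unluckySet α) = n - lucky α := by
  rw [unluckySet, card_map, card_compl, Fintype.card_fin, lucky]

lemma mem_unluckySet {n : ℕ} {α : Fin n → Fin n}
    (h : ∀ i, α i = i ∨ ((α i : ℕ) + 1 = i ∧ α (α i) = α i)) (x : ℕ) :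
    x ∈ unluckySet α ↔ ∃ i : Fin n, α i ≠ i ∧ (i : ℕ) = x := by
  simp [unluckySet, mem_luckySet_iff_apply_eq h]

lemma coe_mem_unluckySet {n : ℕ} {α : Fin n → Fin n}
    (h : ∀ i, α i = i ∨ ((α i : ℕ) + 1 = i ∧ α (α i) = α i)) (i : Fin n) :
    (i : ℕ) ∈ unluckySet α ↔ α i ≠ i := by
  simp [mem_unluckySet h, Fin.val_inj]

lemma lucky_le {n : ℕ} (α : Fin n → Fin n) : lucky α ≤ n :=
  (card_le_univ _).trans_eq (Fintype.card_fin n)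

/-- The ranking in which the cars in `S` tie with their predecessors. -/
def tieWithPred {n : ℕ} (S : Finset ℕ) (i : Fin n) : Fin n :=
  if (i : ℕ) ∈ S then ⟨i - 1, by omega⟩ else i

lemma tieWithPred_spec {n : ℕ} {S : Finset ℕ} (hs : ∀ i ∈ S, 0 < i ∧ i + 1 ∉ S) (i : Fin n) :
    tieWithPred S i = i ∨
      ((tieWithPred S i : ℕ) + 1 = i ∧ tieWithPred S (tieWithPred S i) = tieWithPred S i) := by
  by_cases hi : (i : ℕ) ∈ S
  · have h₁ := (hs _ hi).1
    have h₂ : (i : ℕ) - 1 ∉ S := fun h => (hs _ h).2 (by rwa [Nat.sub_add_cancel h₁])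
    right
    simp [tieWithPred, hi, h₂, Nat.sub_add_cancel h₁]
  · exact Or.inl (if_neg hi)

lemma unluckySet_tieWithPred {n : ℕ} {S : Finset ℕ} (hlt : ∀ i ∈ S, i < n)
    (hs : ∀ i ∈ S, 0 < i ∧ i + 1 ∉ S) : unluckySet (tieWithPred (n := n) S) = S := by
  ext x
  rw [mem_unluckySet (tieWithPred_spec hs)]
  constructor
  · rintro ⟨i, hi, rfl⟩
    by_contra h
    exact hi (if_neg h)
  · intro hx
    refine ⟨⟨x, hlt x hx⟩, fun h => ?_, rfl⟩
    have h₁ := congrArg Fin.val h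
    simp only [tieWithPred, hx, if_true] at h₁
    have := (hs x hx).1
    omega

lemma tieWithPred_unluckySet {n : ℕ} {α : Fin n → Fin n}
    (h : ∀ i, α i = i ∨ ((α i : ℕ) + 1 = i ∧ α (α i) = α i)) :
    tieWithPred (unluckySet α) = α := by
  funext i
  rw [tieWithPred]
  split_ifs with hi
  · rw [coe_mem_unluckySet h] at hi
    have := ((h i).resolve_left hi).1
    exact Fin.ext (by simp only; omega)
  · rw [coe_mem_unluckySet h, not_not] at hi
    exact hi.symm

lemma unluckySet_mem_sparseSets {n : ℕ} {α : Fin n → Fin n}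
    (h : ∀ i, α i = i ∨ ((α i : ℕ) + 1 = i ∧ α (α i) = α i)) :
    unluckySet α ∈ sparseSets n (n - lucky α) := by
  refine mem_sparseSets.mpr ⟨fun x hx => ?_, card_unluckySet α, fun x hx => ?_⟩
  · obtain ⟨i, -, rfl⟩ := (mem_unluckySet h x).mp hx
    exact i.isLt
  · obtain ⟨i, hi, rfl⟩ := (mem_unluckySet h x).mp hx
    refine ⟨by have := ((h i).resolve_left hi).1; omega, fun hx' => ?_⟩
    obtain ⟨j, hj, hji⟩ := (mem_unluckySet h _).mp hx'
    obtain ⟨h₁, h₂⟩ := (h j).resolve_left hj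
    have : α j = i := Fin.ext (by omega)
    rw [this] at h₂
    exact hi h₂

/-- Weakly increasing unit Fubini rankings with `k` lucky cars correspond to their sets of
unlucky cars. -/
def rankingEquivSparseSets {n k : ℕ} (hkn : k ≤ n) :
    {α : Fin n → Fin n // IsFubini α ∧ IsUnit2 α ∧ Monotone α ∧ lucky α = k} ≃
      sparseSets n (n - k) where
  toFun α := ⟨unluckySet α.1, by
    obtain ⟨α, hf, hu, hm, rfl⟩ := α
    exact unluckySet_mem_sparseSets ((isFubini_isUnit2_monotone_iff α).mp ⟨hf, hu, hm⟩)⟩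
  invFun S := ⟨tieWithPred S.1, by
    obtain ⟨S, hS⟩ := S
    obtain ⟨hlt, hc, hs⟩ := mem_sparseSets.mp hS
    obtain ⟨hf, hu, hm⟩ :=
      (isFubini_isUnit2_monotone_iff (tieWithPred (n := n) S)).mpr (tieWithPred_spec hs)
    refine ⟨hf, hu, hm, ?_⟩
    have h₁ := card_unluckySet (tieWithPred (n := n) S)
    have h₂ := lucky_le (tieWithPred (n := n) S)
    rw [unluckySet_tieWithPred hlt hs, hc] at h₁
    simp only
    omega⟩
  left_inv := by
    rintro ⟨α, hf, hu, hm, -⟩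
    exact Subtype.ext
      (tieWithPred_unluckySet ((isFubini_isUnit2_monotone_iff α).mp ⟨hf, hu, hm⟩))
  right_inv := by
    rintro ⟨S, hS⟩
    obtain ⟨hlt, -, hs⟩ := mem_sparseSets.mp hS
    exact Subtype.ext (unluckySet_tieWithPred hlt hs)

/-- For `1 ≤ k ≤ n`, the number of weakly increasing unit Fubini
rankings with `n` competitors having exactly `k` lucky cars equals `C(k, n−k)`. -/
theorem card_weakly_increasing_unit_fubini_lucky
    (n k : ℕ) (hn : 1 ≤ n) (hk : 1 ≤ k) (hkn : k ≤ n) :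
    Nat.card {α : Fin n → Fin n //
        IsFubini α ∧ IsUnit2 α ∧ Monotone α ∧ lucky α = k}
      = Nat.choose k (n - k) := by
  rw [Nat.card_congr (rankingEquivSparseSets hkn), Nat.card_eq_fintype_card, Fintype.card_coe,
    card_sparseSets, Nat.sub_sub_self hkn]
end
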